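/- arXiv:2212.12009 — 5 statements merged into one kernel-verified Lean document; each statement's English description precedes it below -/
import Mathlib

section
/- Let Θ be a partially ordered set in which every pair of elements has an upper bound and a lower bound in Θ, let A be a set, and let u : A × Θ → ℝ have single-crossing differences (SCD). Then the choice correspondence C_u has interval choice: for every subset S ⊆ A and every a ∈ S, the set {θ ∈ Θ : a ∈ C_u(S, θ)} is an interval of Θ. -/
/-- A function `f : Θ → ℝ` is single crossing if `θ ↦ sgn (f θ)` is monotone
(increasing or decreasing). -/
def SingleCrossing {Θ : Type*} [PartialOrder Θ] (f : Θ → ℝ) : Prop :=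
  Monotone (fun θ => Real.sign (f θ)) ∨ Antitone (fun θ => Real.sign (f θ))

/-- Strictly single crossing: single crossing and no two ordered zeros. -/
def StrictSingleCrossing {Θ : Type*} [PartialOrder Θ] (f : Θ → ℝ) : Prop :=
  SingleCrossing f ∧ ∀ θ' θ'' : Θ, θ' < θ'' → ¬(f θ' = 0 ∧ f θ'' = 0)

/-- A subset of a partially ordered set is an interval. -/
def IsIntervalSet {Θ : Type*} [PartialOrder Θ] (S : Set Θ) : Prop :=
  ∀ θl θm θh : Θ, θl ∈ S → θh ∈ S → θl < θm → θm < θh → θm ∈ S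

/-- Single-crossing differences. -/
def SCD {A : Type*} {Θ : Type*} [PartialOrder Θ] (u : A → Θ → ℝ) : Prop :=
  ∀ a a' : A, SingleCrossing (fun θ => u a θ - u a' θ)

/-- Strict single-crossing differences. -/
def SSCD {A : Type*} {Θ : Type*} [PartialOrder Θ] (u : A → Θ → ℝ) : Prop :=
  ∀ a a' : A, a ≠ a' → StrictSingleCrossing (fun θ => u a θ - u a' θ)

/-- The choice correspondence `C_u(S, θ)`. -/
def choiceCorr {A : Type*} {Θ : Type*} (u : A → Θ → ℝ) (S : Set A) (θ : Θ) : Set A :=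
  {a ∈ S | ∀ b ∈ S, u b θ ≤ u a θ}

/-- `f₁` ratio dominates `f₂`: conditions (RD) and (RD+). -/
def RatioDominates {Θ : Type*} [PartialOrder Θ] (f₁ f₂ : Θ → ℝ) : Prop :=
  (∀ θl θh : Θ, θl < θh → f₁ θl * f₂ θh ≤ f₁ θh * f₂ θl) ∧
  (∀ θl θm θh : Θ, θl < θm → θm < θh →
    (f₁ θl * f₂ θh = f₁ θh * f₂ θl ↔
      (f₁ θl * f₂ θm = f₁ θm * f₂ θl ∧ f₁ θm * f₂ θh = f₁ θh * f₂ θm)))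

/-- `f₁` and `f₂` are ratio ordered. -/
def RatioOrdered {Θ : Type*} [PartialOrder Θ] (f₁ f₂ : Θ → ℝ) : Prop :=
  RatioDominates f₁ f₂ ∨ RatioDominates f₂ f₁

/-- `f₁` strictly ratio dominates `f₂`. -/
def StrictRatioDominates {Θ : Type*} [PartialOrder Θ] (f₁ f₂ : Θ → ℝ) : Prop :=
  ∀ θl θh : Θ, θl < θh → f₁ θl * f₂ θh < f₁ θh * f₂ θl

/-- `f₁` and `f₂` are strictly ratio ordered. -/
def StrictRatioOrdered {Θ : Type*} [PartialOrder Θ] (f₁ f₂ : Θ → ℝ) : Prop :=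
  StrictRatioDominates f₁ f₂ ∨ StrictRatioDominates f₂ f₁

/-- The environment `(A, Θ, u)` is convex. -/
def ConvexEnv {A : Type*} {Θ : Type*} (u : A → Θ → ℝ) : Prop :=
  ∀ a a' : A, ∀ lam : ℝ, 0 < lam → lam < 1 →
    ∃ a'' : A, ∀ θ : Θ, u a'' θ = lam * u a θ + (1 - lam) * u a' θ

/-- `A` is minimal with respect to `u`: no utility-indistinguishable pair. -/
def MinimalActions {A : Type*} {Θ : Type*} (u : A → Θ → ℝ) : Prop :=
  ∀ a a' : A, a ≠ a' → ∃ θ : Θ, u a θ ≠ u a' θ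

/-- `f : Z × Θ → ℝ` is linear combinations SC-preserving. -/
def LinCombSCPreserving {Z : Type*} {Θ : Type*} [PartialOrder Θ] (f : Z → Θ → ℝ) : Prop :=
  ∀ μ : Z → ℝ, (Function.support μ).Finite →
    SingleCrossing (fun θ => ∑ᶠ z, μ z * f z θ)

/-- `f : Z × Θ → ℝ` is linear combinations SSC-preserving. -/
def LinCombSSCPreserving {Z : Type*} {Θ : Type*} [PartialOrder Θ] (f : Z → Θ → ℝ) : Prop :=
  ∀ μ : Z → ℝ, (Function.support μ).Finite →
    ((∀ θ : Θ, (∑ᶠ z, μ z * f z θ) = 0) ∨ StrictSingleCrossing (fun θ => ∑ᶠ z, μ z * f z θ))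

/-- `f : Z × Θ → ℝ` is linear combinations monotonicity-preserving. -/
def LinCombMonPreserving {Z : Type*} {Θ : Type*} [PartialOrder Θ] (f : Z → Θ → ℝ) : Prop :=
  ∀ μ : Z → ℝ, (Function.support μ).Finite →
    (Monotone (fun θ => ∑ᶠ z, μ z * f z θ) ∨ Antitone (fun θ => ∑ᶠ z, μ z * f z θ))

/-- A finite-support lottery on `X`. -/
def IsLottery {X : Type*} (P : X → ℝ) : Prop :=
  (∀ x, 0 ≤ P x) ∧ (Function.support P).Finite ∧ (∑ᶠ x, P x) = 1

/-- Single-crossing expectational differences. -/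
def SCED {X : Type*} {Θ : Type*} [PartialOrder Θ] (v : X → Θ → ℝ) : Prop :=
  ∀ P Q : X → ℝ, IsLottery P → IsLottery Q →
    SingleCrossing (fun θ => (∑ᶠ x, P x * v x θ) - ∑ᶠ x, Q x * v x θ)

/-! Along a chain `θl < θm < θh`, a function with monotone sign has at `θm` at least the sign it has
at one of the endpoints: `θl` if the sign is increasing, `θh` if it is decreasing. So if `a` is
chosen at both endpoints, then for every rival `b` the difference `u a - u b` is nonnegative at both
endpoints, hence at `θm`. -/

theorem real_sign_nonneg_iff {x : ℝ} : 0 ≤ Real.sign x ↔ 0 ≤ x := by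
  rcases lt_trichotomy x 0 with hx | rfl | hx
  · norm_num [Real.sign_of_neg hx, hx]
  · simp
  · simp [Real.sign_of_pos hx, hx.le]

theorem SingleCrossing.isIntervalSet_setOf_nonneg {Θ : Type*} [PartialOrder Θ] {f : Θ → ℝ}
    (hf : SingleCrossing f) : IsIntervalSet {θ | 0 ≤ f θ} := by
  intro θl θm θh hl hh hlm hmh
  rcases hf with hmono | hanti
  · exact real_sign_nonneg_iff.1 ((real_sign_nonneg_iff.2 hl).trans (hmono hlm.le))
  · exact real_sign_nonneg_iff.1 ((real_sign_nonneg_iff.2 hh).trans (hanti hmh.le))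

theorem scd_implies_interval_choice_general {Θ A : Type*} [PartialOrder Θ] {u : A → Θ → ℝ}
    (hscd : SCD u) (S : Set A) (a : A) : IsIntervalSet {θ | a ∈ choiceCorr u S θ} := by
  intro θl θm θh hl hh hlm hmh
  refine ⟨hl.1, fun b hb => sub_nonneg.1 ?_⟩
  have hbl : 0 ≤ u a θl - u b θl := sub_nonneg.2 (hl.2 b hb)
  have hbh : 0 ≤ u a θh - u b θh := sub_nonneg.2 (hh.2 b hb)
  exact (hscd a b).isIntervalSet_setOf_nonneg θl θm θh hbl hbh hlm hmh

/-- If `u` has SCD, the choice correspondence `C_u` has interval choice. -/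
theorem scd_implies_interval_choice {Θ A : Type*} [PartialOrder Θ]
    (hub : ∀ θ₁ θ₂ : Θ, ∃ θ : Θ, θ₁ ≤ θ ∧ θ₂ ≤ θ)
    (hlb : ∀ θ₁ θ₂ : Θ, ∃ θ : Θ, θ ≤ θ₁ ∧ θ ≤ θ₂)
    (u : A → Θ → ℝ) (hscd : SCD u) :
    ∀ (S : Set A), ∀ a ∈ S, IsIntervalSet {θ : Θ | a ∈ choiceCorr u S θ} :=
  fun S a _ => scd_implies_interval_choice_general hscd S a
end

section
/- Let Θ be a partially ordered set with at least three elements in which every pair of elements has an upper bound and a lower bound in Θ, let A be a set, and let u : A × Θ → ℝ. Then u has strict single-crossing differences (SSCD) if and only if every selection from the choice correspondence C_u has interval choice, i.e., for every function s assigning to each pair (S, θ) with C_u(S,θ) ≠ ∅ an element s(S,θ) ∈ C_u(S,θ), and for every S ⊆ A and a ∈ S, the set {θ ∈ Θ : C_u(S,θ) ≠ ∅ and s(S,θ) = a} is an interval of Θ. -/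
theorem real_sign_lt_sign_iff {x y : ℝ} :
    Real.sign x < Real.sign y ↔ x ≤ 0 ∧ 0 ≤ y ∧ x < y := by
  rcases lt_trichotomy x 0 with hx | rfl | hx <;> rcases lt_trichotomy y 0 with hy | rfl | hy <;>
    norm_num [Real.sign_of_neg, Real.sign_of_pos, *, le_of_lt, not_le_of_gt]
  exact hx.trans hy

theorem pos_of_real_sign_le_sign {x y : ℝ} (hxy : Real.sign x ≤ Real.sign y)
    (hzero : ¬(x = 0 ∧ y = 0)) (hx : 0 ≤ x) : 0 < y := by
  by_contra! hy
  have hle : x ≤ y := not_lt.1 fun hlt => hxy.not_gt (real_sign_lt_sign_iff.2 ⟨hy, hx, hlt⟩)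
  exact hzero ⟨le_antisymm (hle.trans hy) hx, le_antisymm hy (hx.trans hle)⟩

section PosBetweenNonneg

variable {Θ : Type*} [LT Θ] {f : Θ → ℝ}

/-- The function `f` is positive at every point strictly between two points where it is
nonnegative. This is one half of strict single crossing; the other half is the same property of
`-f`. -/
def PosBetweenNonneg (f : Θ → ℝ) : Prop :=
  ∀ ⦃l m h : Θ⦄, l < m → m < h → 0 ≤ f l → 0 ≤ f h → 0 < f m

theorem PosBetweenNonneg.neg_of_lt_of_nonneg_of_nonpos (hf : PosBetweenNonneg f)
    {x y v : Θ} (hxy : x < y) (hyv : y < v) (hx : 0 ≤ f x) (hy : f y ≤ 0) : f v < 0 :=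
  lt_of_not_ge fun hv => (hf hxy hyv hx hv).not_ge hy

theorem PosBetweenNonneg.neg_of_lt_of_nonpos_of_nonneg (hf : PosBetweenNonneg f)
    {t x y : Θ} (htx : t < x) (hxy : x < y) (hx : f x ≤ 0) (hy : 0 ≤ f y) : f t < 0 :=
  lt_of_not_ge fun ht => (hf htx hxy ht hy).not_ge hx

end PosBetweenNonneg

section SingleCrossing

variable {Θ : Type*} [PartialOrder Θ] {f : Θ → ℝ}

theorem StrictSingleCrossing.posBetweenNonneg (hf : StrictSingleCrossing f) :
    PosBetweenNonneg f := by
  obtain ⟨hmono | hanti, hzero⟩ := hf <;> intro l m h hlm hmh hl hh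
  · exact pos_of_real_sign_le_sign (hmono hlm.le) (hzero l m hlm) hl
  · exact pos_of_real_sign_le_sign (hanti hmh.le) (fun hz => hzero m h hmh hz.symm) hh

theorem StrictSingleCrossing.neg (hf : StrictSingleCrossing f) : StrictSingleCrossing (-f) := by
  refine ⟨?_, by simpa [StrictSingleCrossing] using hf.2⟩
  simp only [SingleCrossing, Pi.neg_apply, Real.sign_neg]
  exact hf.1.symm.imp Antitone.neg Monotone.neg

namespace PosBetweenNonneg

theorem lt_of_fall (hf : PosBetweenNonneg f) (hneg : PosBetweenNonneg (-f)) {t x y v : Θ}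
    (htx : t ≤ x) (hxy : x ≤ y) (hyv : y ≤ v) (hfall : f y ≤ 0 ∧ 0 ≤ f x ∧ f y < f x) :
    f v < f t := by
  obtain ⟨hy, hx, hlt⟩ := hfall
  have hxy : x < y := hxy.lt_of_ne (by rintro rfl; exact hlt.false)
  have ht : t = x ∨ 0 < f t := htx.eq_or_lt.imp_right fun htx =>
    neg_neg_iff_pos.1 <|
      hneg.neg_of_lt_of_nonpos_of_nonneg htx hxy (neg_nonpos.2 hx) (neg_nonneg.2 hy)
  have hv : y = v ∨ f v < 0 := hyv.eq_or_lt.imp_right fun hyv =>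
    hf.neg_of_lt_of_nonneg_of_nonpos hxy hyv hx hy
  rcases ht with rfl | ht <;> rcases hv with rfl | hv <;> linarith

variable [IsDirectedOrder Θ] [IsCodirectedOrder Θ]

theorem singleCrossing (hf : PosBetweenNonneg f) (hneg : PosBetweenNonneg (-f)) :
    SingleCrossing f := by
  by_contra hcross
  simp only [SingleCrossing, Monotone, Antitone, not_or, not_forall, not_le,
    real_sign_lt_sign_iff] at hcross
  obtain ⟨⟨x, y, hxy, hfall⟩, z, w, hzw, hz, hw, hrise⟩ := hcross
  obtain ⟨t, htx, htz⟩ := exists_le_le x z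
  obtain ⟨v, hyv, hwv⟩ := exists_ge_ge y w
  have hfall_tv : f v < f t := hf.lt_of_fall hneg htx hxy hyv hfall
  have hrise_tv : -f v < -f t := hneg.lt_of_fall (by rwa [neg_neg]) htz hzw hwv
    ⟨neg_nonpos.2 hw, neg_nonneg.2 hz, neg_lt_neg hrise⟩
  exact lt_asymm hfall_tv (neg_lt_neg_iff.1 hrise_tv)

theorem eq_or_eq_of_zeros (hf : PosBetweenNonneg f) (hneg : PosBetweenNonneg (-f)) {p q : Θ}
    (hpq : p < q) (hp : f p = 0) (hq : f q = 0) (c : Θ) : c = p ∨ c = q := by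
  have hp' : (-f) p = 0 := neg_eq_zero.2 hp
  have hq' : (-f) q = 0 := neg_eq_zero.2 hq
  have not_neg_neg (c : Θ) (hc : f c < 0) (hc' : (-f) c < 0) : False :=
    lt_asymm hc (neg_neg_iff_pos.1 hc')
  have hbot : IsBot p := (isMin_iff_forall_not_lt.2 fun c hcp => not_neg_neg c
    (hf.neg_of_lt_of_nonpos_of_nonneg hcp hpq hp.le hq.ge)
    (hneg.neg_of_lt_of_nonpos_of_nonneg hcp hpq hp'.le hq'.ge)).isBot
  have htop : IsTop q := (isMax_iff_forall_not_lt.2 fun c hqc => not_neg_neg c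
    (hf.neg_of_lt_of_nonneg_of_nonpos hpq hqc hp.ge hq.le)
    (hneg.neg_of_lt_of_nonneg_of_nonpos hpq hqc hp'.ge hq'.le)).isTop
  by_contra! hc
  have hpc : p < c := (hbot c).lt_of_ne' hc.1
  have hcq : c < q := (htop c).lt_of_ne hc.2
  exact lt_asymm (hf hpc hcq hp.ge hq.ge) (neg_pos.1 (hneg hpc hcq hp'.ge hq'.ge))

end PosBetweenNonneg

theorem strictSingleCrossing_iff_posBetweenNonneg [IsDirectedOrder Θ] [IsCodirectedOrder Θ]
    (hthree : ∃ θ₁ θ₂ θ₃ : Θ, θ₁ ≠ θ₂ ∧ θ₁ ≠ θ₃ ∧ θ₂ ≠ θ₃) :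
    StrictSingleCrossing f ↔ PosBetweenNonneg f ∧ PosBetweenNonneg (-f) := by
  refine ⟨fun hf => ⟨hf.posBetweenNonneg, hf.neg.posBetweenNonneg⟩,
    fun ⟨hf, hneg⟩ => ⟨hf.singleCrossing hneg, ?_⟩⟩
  rintro p q hpq ⟨hp, hq⟩
  have only_two := hf.eq_or_eq_of_zeros hneg hpq hp hq
  obtain ⟨x, y, z, hxy, hxz, hyz⟩ := hthree
  grind [only_two x, only_two y, only_two z]

theorem sscd_iff_posBetweenNonneg [IsDirectedOrder Θ] [IsCodirectedOrder Θ]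
    (hthree : ∃ θ₁ θ₂ θ₃ : Θ, θ₁ ≠ θ₂ ∧ θ₁ ≠ θ₃ ∧ θ₂ ≠ θ₃) {A : Type*} {u : A → Θ → ℝ} :
    SSCD u ↔ ∀ a b, a ≠ b → PosBetweenNonneg (u a - u b) := by
  refine ⟨fun hu a b hab => (hu a b hab).posBetweenNonneg, fun hu a b hab => ?_⟩
  have hneg : PosBetweenNonneg (-(u a - u b)) := neg_sub (u a) (u b) ▸ hu b a hab.symm
  exact (strictSingleCrossing_iff_posBetweenNonneg hthree).2 ⟨hu a b hab, hneg⟩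

end SingleCrossing

section Selection

variable {Θ A : Type*} {u : A → Θ → ℝ}

/-- The function `s` is a selection from the choice correspondence `C_u`. Its value is arbitrary
where `C_u` is empty. -/
def IsSelection (u : A → Θ → ℝ) (s : Set A → Θ → A) : Prop :=
  ∀ (S : Set A) (θ : Θ), (choiceCorr u S θ).Nonempty → s S θ ∈ choiceCorr u S θ

/-- Interval choice for a selection `s` from `C_u`: each action is chosen from each menu on an
interval of parameters. Parameters where `C_u` is empty are left out, since the value of `s` there
is arbitrary. -/
def HasIntervalChoice [PartialOrder Θ] (u : A → Θ → ℝ) (s : Set A → Θ → A) : Prop :=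
  ∀ (S : Set A), ∀ a ∈ S, IsIntervalSet {θ : Θ | (choiceCorr u S θ).Nonempty ∧ s S θ = a}

theorem mem_choiceCorr_pair_left {a b : A} {θ : Θ} :
    a ∈ choiceCorr u {a, b} θ ↔ u b θ ≤ u a θ := by
  simp [choiceCorr]

theorem exists_isSelection_eq_of_mem (u : A → Θ → ℝ) (p : Set A → Θ → A) :
    ∃ s, IsSelection u s ∧ ∀ S θ, p S θ ∈ choiceCorr u S θ → s S θ = p S θ := by
  have exists_value (S : Set A) (θ : Θ) :
      ∃ c, ((choiceCorr u S θ).Nonempty → c ∈ choiceCorr u S θ) ∧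
        (p S θ ∈ choiceCorr u S θ → c = p S θ) := by
    by_cases hp : p S θ ∈ choiceCorr u S θ
    · exact ⟨p S θ, fun _ => hp, fun _ => rfl⟩
    by_cases hne : (choiceCorr u S θ).Nonempty
    · exact ⟨hne.some, fun _ => hne.some_mem, fun h => absurd h hp⟩
    · exact ⟨p S θ, fun h => absurd h hne, fun _ => rfl⟩
  choose s hs hsp using exists_value
  exact ⟨s, hs, hsp⟩

theorem choiceCorr_eq_singleton_of_mem_of_mem [LT Θ] {a : A}
    (ha : ∀ b, a ≠ b → PosBetweenNonneg (u a - u b)) {S : Set A} {l m h : Θ}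
    (hlm : l < m) (hmh : m < h) (hl : a ∈ choiceCorr u S l) (hh : a ∈ choiceCorr u S h) :
    choiceCorr u S m = {a} := by
  have strict (b : A) (hb : b ∈ S) (hba : b ≠ a) : u b m < u a m := sub_pos.1 <|
    ha b hba.symm hlm hmh (sub_nonneg.2 (hl.2 b hb)) (sub_nonneg.2 (hh.2 b hb))
  refine Set.eq_singleton_iff_unique_mem.2 ⟨⟨hl.1, fun b hb => ?_⟩, fun b hb => ?_⟩
  · obtain rfl | hba := eq_or_ne b a
    exacts [le_rfl, (strict b hb hba).le]
  · by_contra hba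
    exact (strict b hb.1 hba).not_ge (hb.2 a hl.1)

variable [PartialOrder Θ]

theorem IsSelection.hasIntervalChoice {s : Set A → Θ → A} (hs : IsSelection u s)
    (hu : ∀ a b, a ≠ b → PosBetweenNonneg (u a - u b)) : HasIntervalChoice u s := by
  rintro S a - l m h ⟨hl, rfl⟩ ⟨hh, hsh⟩ hlm hmh
  have hm : choiceCorr u S m = {s S l} :=
    choiceCorr_eq_singleton_of_mem_of_mem (hu _) hlm hmh (hs S l hl) (hsh ▸ hs S h hh)
  have hne : (choiceCorr u S m).Nonempty := hm ▸ Set.singleton_nonempty _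
  exact ⟨hne, by simpa only [hm, Set.mem_singleton_iff] using hs S m hne⟩

open Classical in
theorem posBetweenNonneg_of_hasIntervalChoice
    (hu : ∀ s, IsSelection u s → HasIntervalChoice u s) {a b : A} (hab : a ≠ b) :
    PosBetweenNonneg (u a - u b) := by
  intro l m h hlm hmh hl hh
  by_contra! hm
  obtain ⟨s, hs, hsp⟩ := exists_isSelection_eq_of_mem u fun _ θ => if θ = m then b else a
  have chosen_a (θ : Θ) (hθ : θ ≠ m) (hnonneg : 0 ≤ (u a - u b) θ) :
      (choiceCorr u {a, b} θ).Nonempty ∧ s {a, b} θ = a := by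
    have ha : a ∈ choiceCorr u {a, b} θ := mem_choiceCorr_pair_left.2 (sub_nonneg.1 hnonneg)
    exact ⟨⟨a, ha⟩, by simpa [hθ, ha] using hsp {a, b} θ⟩
  have chosen_b : s {a, b} m = b := by
    have hb : b ∈ choiceCorr u {a, b} m :=
      Set.pair_comm b a ▸ mem_choiceCorr_pair_left.2 (sub_nonpos.1 hm)
    simpa [hb] using hsp {a, b} m
  have chosen_a_m : s {a, b} m = a :=
    (hu s hs {a, b} a (Set.mem_insert a {b}) l m h
      (chosen_a l hlm.ne hl) (chosen_a h hmh.ne' hh) hlm hmh).2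
  exact hab (chosen_a_m.symm.trans chosen_b)

theorem forall_hasIntervalChoice_iff_posBetweenNonneg :
    (∀ s, IsSelection u s → HasIntervalChoice u s) ↔
      ∀ a b, a ≠ b → PosBetweenNonneg (u a - u b) :=
  ⟨fun hu _ _ hab => posBetweenNonneg_of_hasIntervalChoice hu hab,
    fun hu _ hs => hs.hasIntervalChoice hu⟩

end Selection

/-- With `|Θ| ≥ 3`, `u` has SSCD iff every selection from `C_u`
has interval choice. -/
theorem sscd_iff_selection_interval_choice {Θ A : Type*} [PartialOrder Θ]
    (hub : ∀ θ₁ θ₂ : Θ, ∃ θ : Θ, θ₁ ≤ θ ∧ θ₂ ≤ θ)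
    (hlb : ∀ θ₁ θ₂ : Θ, ∃ θ : Θ, θ ≤ θ₁ ∧ θ ≤ θ₂)
    (hthree : ∃ θ₁ θ₂ θ₃ : Θ, θ₁ ≠ θ₂ ∧ θ₁ ≠ θ₃ ∧ θ₂ ≠ θ₃)
    (u : A → Θ → ℝ) :
    SSCD u ↔
      ∀ s : Set A → Θ → A,
        (∀ (S : Set A) (θ : Θ), (choiceCorr u S θ).Nonempty → s S θ ∈ choiceCorr u S θ) →
        ∀ (S : Set A), ∀ a ∈ S,
          IsIntervalSet {θ : Θ | (choiceCorr u S θ).Nonempty ∧ s S θ = a} := by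
  have : IsDirectedOrder Θ := ⟨hub⟩
  have : IsCodirectedOrder Θ := ⟨hlb⟩
  exact (sscd_iff_posBetweenNonneg hthree).trans
    forall_hasIntervalChoice_iff_posBetweenNonneg.symm
end

section
/- Let Θ be a partially ordered set in which every pair of elements has an upper bound and a lower bound in Θ, and let f : Θ → ℝ. Then f is not single crossing if and only if there exist θ_l < θ_m < θ_h in Θ such that either (sgn(f(θ_l)) < sgn(f(θ_m)) and sgn(f(θ_m)) > sgn(f(θ_h))), or (sgn(f(θ_l)) > sgn(f(θ_m)) and sgn(f(θ_m)) < sgn(f(θ_h))). -/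
section Reversal

variable {α β : Type*}

/-- A function has a reversal if along some chain `a ≤ b ≤ c` its value at `b` is strictly above
both outer values (a peak) or strictly below both (a valley). On a preorder the chain cannot be
asked to be strict, since equivalent elements may have different values. -/
def HasReversal [Preorder α] [Preorder β] (g : α → β) : Prop :=
  ∃ a b c, a ≤ b ∧ b ≤ c ∧ (g a < g b ∧ g c < g b ∨ g b < g a ∧ g b < g c)

theorem HasReversal.not_monotone_or_antitone [Preorder α] [Preorder β] {g : α → β}
    (hg : HasReversal g) : ¬ (Monotone g ∨ Antitone g) := by
  obtain ⟨a, b, c, hab, hbc, ⟨hgab, hgcb⟩ | ⟨hgba, hgbc⟩⟩ := hg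
  · rintro (hmono | hanti)
    · exact hgcb.not_ge (hmono hbc)
    · exact hgab.not_ge (hanti hab)
  · rintro (hmono | hanti)
    · exact hgba.not_ge (hmono hab)
    · exact hgbc.not_ge (hanti hbc)

theorem hasReversal_toDual_comp_iff [Preorder α] [Preorder β] {g : α → β} :
    HasReversal (OrderDual.toDual ∘ g) ↔ HasReversal g := by
  simp only [HasReversal, Function.comp_apply, OrderDual.toDual_lt_toDual, or_comm]

theorem hasReversal_iff_exists_lt_lt [PartialOrder α] [Preorder β] {g : α → β} :
    HasReversal g ↔
      ∃ a b c, a < b ∧ b < c ∧ (g a < g b ∧ g c < g b ∨ g b < g a ∧ g b < g c) := by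
  constructor
  · rintro ⟨a, b, c, hab, hbc, hg⟩
    have hne_ab : a ≠ b := by
      rintro rfl
      exact hg.elim (fun h => h.1.false) (fun h => h.1.false)
    have hne_bc : b ≠ c := by
      rintro rfl
      exact hg.elim (fun h => h.2.false) (fun h => h.2.false)
    exact ⟨a, b, c, hab.lt_of_ne hne_ab, hbc.lt_of_ne hne_bc, hg⟩
  · rintro ⟨a, b, c, hab, hbc, hg⟩
    exact ⟨a, b, c, hab.le, hbc.le, hg⟩

theorem map_lt_map_of_not_hasReversal [Preorder α] [LinearOrder β] {g : α → β}
    (hg : ¬ HasReversal g) {l a b h : α} (hla : l ≤ a) (hab : a ≤ b) (hbh : b ≤ h)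
    (hdrop : g b < g a) : g h < g l := by
  have hal : g a ≤ g l := not_lt.mp fun hrise =>
    hg ⟨l, a, b, hla, hab, Or.inl ⟨hrise, hdrop⟩⟩
  have hhb : g h ≤ g b := not_lt.mp fun hrise =>
    hg ⟨a, b, h, hab, hbh, Or.inr ⟨hdrop, hrise⟩⟩
  exact hhb.trans_lt (hdrop.trans_le hal)

theorem not_monotone_or_antitone_iff_hasReversal [Preorder α] [IsDirectedOrder α]
    [IsCodirectedOrder α] [LinearOrder β] {g : α → β} :
    ¬ (Monotone g ∨ Antitone g) ↔ HasReversal g := by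
  refine ⟨fun hnot => ?_, HasReversal.not_monotone_or_antitone⟩
  by_contra hg
  obtain ⟨hmono, hanti⟩ := not_or.mp hnot
  obtain ⟨a, b, hab, hdrop⟩ : ∃ a b, a ≤ b ∧ g b < g a := by
    simpa only [Monotone, not_forall, not_le, exists_prop] using hmono
  obtain ⟨c, d, hcd, hrise⟩ : ∃ c d, c ≤ d ∧ g c < g d := by
    simpa only [Antitone, not_forall, not_le, exists_prop] using hanti
  obtain ⟨l, hla, hlc⟩ := exists_le_le a c
  obtain ⟨h, hbh, hdh⟩ := exists_ge_ge b d
  have hhl : g h < g l := map_lt_map_of_not_hasReversal hg hla hab hbh hdrop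
  have hlh : g l < g h := OrderDual.toDual_lt_toDual.mp <|
    map_lt_map_of_not_hasReversal (g := OrderDual.toDual ∘ g)
      (mt hasReversal_toDual_comp_iff.mp hg) hlc hcd hdh hrise
  exact hhl.asymm hlh

theorem not_singleCrossing_iff_sign_reversal_general [PartialOrder α] [IsDirectedOrder α]
    [IsCodirectedOrder α] [LinearOrder β] (g : α → β) :
    ¬ (Monotone g ∨ Antitone g) ↔
      ∃ a b c, a < b ∧ b < c ∧ (g a < g b ∧ g c < g b ∨ g b < g a ∧ g b < g c) :=
  not_monotone_or_antitone_iff_hasReversal.trans hasReversal_iff_exists_lt_lt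

end Reversal

/-- `f` is not single crossing iff there is a sign reversal
around some middle type. -/
theorem not_singleCrossing_iff_sign_reversal {Θ : Type*} [PartialOrder Θ]
    (hub : ∀ θ₁ θ₂ : Θ, ∃ θ : Θ, θ₁ ≤ θ ∧ θ₂ ≤ θ)
    (hlb : ∀ θ₁ θ₂ : Θ, ∃ θ : Θ, θ ≤ θ₁ ∧ θ ≤ θ₂)
    (f : Θ → ℝ) :
    ¬ SingleCrossing f ↔
      ∃ θl θm θh : Θ, θl < θm ∧ θm < θh ∧
        ((Real.sign (f θl) < Real.sign (f θm) ∧ Real.sign (f θh) < Real.sign (f θm)) ∨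
         (Real.sign (f θm) < Real.sign (f θl) ∧ Real.sign (f θm) < Real.sign (f θh))) := by
  have : IsDirectedOrder Θ := ⟨hub⟩
  have : IsCodirectedOrder Θ := ⟨hlb⟩
  exact not_singleCrossing_iff_sign_reversal_general fun θ => Real.sign (f θ)
end

section
/- Let Θ be a partially ordered set in which every pair of elements has an upper bound and a lower bound in Θ, and let f₁, f₂ : Θ → ℝ. Then the linear combination θ ↦ α₁·f₁(θ) + α₂·f₂(θ) is single crossing for every (α₁, α₂) ∈ ℝ² if and only if f₁ and f₂ are each single crossing and ratio ordered. -/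
open SignType (sign)

section Directed

variable {α β : Type*} [Preorder α] [IsDirectedOrder α] [IsCodirectedOrder α] [LinearOrder β]

lemma monotone_or_antitone_of_forall_mem_uIcc {f : α → β}
    (hf : ∀ ⦃l m h⦄, l ≤ m → m ≤ h → f m ∈ Set.uIcc (f l) (f h)) :
    Monotone f ∨ Antitone f := by
  -- A descent `a ≤ b` and an ascent `c ≤ d` both lie between a common lower bound and a common
  -- upper bound, whose values they compare in opposite ways.
  by_contra hne
  simp only [Monotone, Antitone, not_or, not_forall, not_le] at hne
  obtain ⟨⟨a, b, hab, hdesc⟩, c, d, hcd, hasc⟩ := hne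
  obtain ⟨l, hla, hlc⟩ := exists_le_le a c
  obtain ⟨h, hbh, hdh⟩ := exists_ge_ge b d
  have ha := hf hla hab
  have hb := hf hab hbh
  have hc := hf hlc hcd
  have hd := hf hcd hdh
  simp only [Set.mem_uIcc] at ha hb hc hd
  grind

end Directed

section Sign

lemma real_sign_eq_coe_sign (x : ℝ) : Real.sign x = (sign x : ℝ) := by
  rcases lt_trichotomy x 0 with hx | rfl | hx
  · simp [Real.sign_of_neg hx, sign_neg hx]
  · simp
  · simp [Real.sign_of_pos hx, sign_pos hx]

lemma real_sign_le_real_sign_iff {x y : ℝ} : Real.sign x ≤ Real.sign y ↔ sign x ≤ sign y := by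
  rw [real_sign_eq_coe_sign, real_sign_eq_coe_sign]
  cases sign x <;> cases sign y <;> simp

variable {𝕜 : Type*} [Field 𝕜] [LinearOrder 𝕜] [IsStrictOrderedRing 𝕜]

lemma sign_mem_uIcc_of_mul_eq_add {x y z p q d : 𝕜} (hp : 0 ≤ p) (hq : 0 ≤ q) (hpq : 0 < p + q)
    (hd : 0 < d) (h : y * d = x * p + z * q) : sign y ∈ Set.uIcc (sign x) (sign z) := by
  have hmean : y * (d / (p + q)) ∈ Set.uIcc x z := by
    rw [← segment_eq_uIcc]
    refine ⟨p / (p + q), q / (p + q), by positivity, by positivity, by field_simp, ?_⟩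
    simp only [smul_eq_mul]
    field_simp
    linear_combination -h
  have hsign : sign (y * (d / (p + q))) = sign y := by
    rw [sign_mul, sign_pos (div_pos hd hpq), mul_one]
  exact hsign ▸ sign.monotone.mapsTo_uIcc hmean

end Sign

section SingleCrossing

variable {Θ : Type*} [PartialOrder Θ] {f : Θ → ℝ}

lemma singleCrossing_iff_sign :
    SingleCrossing f ↔ Monotone (fun θ => sign (f θ)) ∨ Antitone (fun θ => sign (f θ)) := by
  simp only [SingleCrossing, Monotone, Antitone, real_sign_le_real_sign_iff]

lemma SingleCrossing.const_mul (hf : SingleCrossing f) (c : ℝ) :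
    SingleCrossing fun θ => c * f θ := by
  have hsign (θ : Θ) : Real.sign (c * f θ) = Real.sign c * Real.sign (f θ) := by
    simp only [real_sign_eq_coe_sign, sign_mul, SignType.coe_mul]
  simp only [SingleCrossing, hsign]
  rcases le_total 0 (Real.sign c) with hc | hc
  · exact hf.imp (·.const_mul hc) (·.const_mul hc)
  · exact hf.symm.imp (·.const_mul_of_nonpos hc) (·.const_mul_of_nonpos hc)

lemma SingleCrossing.sign_mem_uIcc (hf : SingleCrossing f) {l m h : Θ} (hlm : l ≤ m)
    (hmh : m ≤ h) : sign (f m) ∈ Set.uIcc (sign (f l)) (sign (f h)) := by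
  rcases singleCrossing_iff_sign.1 hf with hf | hf
  · exact Set.mem_uIcc_of_le (hf hlm) (hf hmh)
  · exact Set.mem_uIcc_of_ge (hf hmh) (hf hlm)

lemma SingleCrossing.ordConnected_nonpos (hf : SingleCrossing f) : {θ | f θ ≤ 0}.OrdConnected := by
  refine ⟨fun l hl h hh m hm => ?_⟩
  exact sign_nonpos_iff.1 (Set.ordConnected_Iic.uIcc_subset (sign_nonpos_iff.2 hl)
    (sign_nonpos_iff.2 hh) (hf.sign_mem_uIcc hm.1 hm.2))

lemma SingleCrossing.eq_zero_iff_of_eq (hf : SingleCrossing f) {l m h : Θ} (hlm : l ≤ m)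
    (hmh : m ≤ h) (hlh : f l = f h) : f m = 0 ↔ f l = 0 := by
  have hsign : sign (f m) = sign (f l) := by
    simpa [← hlh] using hf.sign_mem_uIcc hlm hmh
  rw [← sign_eq_zero_iff, hsign, sign_eq_zero_iff]

end SingleCrossing

section PlanarCross

/-- The cross product of the plane vectors `(f₁ b, f₂ b)` and `(f₁ a, f₂ a)`, in this order so that
condition (RD) of ratio dominance says that it is nonnegative for `a < b`. -/
def planarCross {Θ R : Type*} [CommRing R] (f₁ f₂ : Θ → R) (a b : Θ) : R :=
  f₁ b * f₂ a - f₁ a * f₂ b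

variable {Θ : Type*}

section CommRing

variable {R : Type*} [CommRing R] (f₁ f₂ : Θ → R)

@[simp]
lemma planarCross_self (a : Θ) : planarCross f₁ f₂ a a = 0 :=
  sub_self _

lemma neg_planarCross (a b : Θ) : -planarCross f₁ f₂ a b = planarCross f₁ f₂ b a :=
  neg_sub _ _

lemma planarCross_swap (a b : Θ) : planarCross f₂ f₁ a b = -planarCross f₁ f₂ a b := by
  simp only [planarCross]
  ring

lemma linComb_mul_planarCross (α₁ α₂ : R) (l m h : Θ) :
    (α₁ * f₁ m + α₂ * f₂ m) * planarCross f₁ f₂ l h =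
      (α₁ * f₁ l + α₂ * f₂ l) * planarCross f₁ f₂ m h +
        (α₁ * f₁ h + α₂ * f₂ h) * planarCross f₁ f₂ l m := by
  simp only [planarCross]
  ring

end CommRing

lemma exists_linComb_eq_const_mul {K : Type*} [Field K] {f₁ f₂ : Θ → K} {s : Set Θ}
    (hs : ∀ a ∈ s, ∀ b ∈ s, planarCross f₁ f₂ a b = 0) (α₁ α₂ : K) :
    ∃ c, (∀ θ ∈ s, α₁ * f₁ θ + α₂ * f₂ θ = c * f₁ θ) ∨
      ∀ θ ∈ s, α₁ * f₁ θ + α₂ * f₂ θ = c * f₂ θ := by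
  by_cases hf₁ : ∀ p ∈ s, f₁ p = 0
  · exact ⟨α₂, Or.inr fun θ hθ => by simp [hf₁ θ hθ]⟩
  · push Not at hf₁
    obtain ⟨p, hp, hfp⟩ := hf₁
    refine ⟨α₁ + α₂ * (f₂ p / f₁ p), Or.inl fun θ hθ => ?_⟩
    have hpθ : f₁ θ * f₂ p = f₁ p * f₂ θ := sub_eq_zero.1 (hs p hp θ hθ)
    field_simp
    linear_combination -α₂ * hpθ

end PlanarCross

section RatioDominates

variable {Θ : Type*} [PartialOrder Θ] {f₁ f₂ : Θ → ℝ}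

lemma ratioDominates_iff_planarCross :
    RatioDominates f₁ f₂ ↔
      (∀ l h, l < h → 0 ≤ planarCross f₁ f₂ l h) ∧
      ∀ l m h, l < m → m < h → (planarCross f₁ f₂ l h = 0 ↔
        planarCross f₁ f₂ l m = 0 ∧ planarCross f₁ f₂ m h = 0) := by
  simp only [RatioDominates, planarCross, sub_nonneg, sub_eq_zero, eq_comm]

lemma RatioDominates.sign_linComb_mem_uIcc (hf : RatioDominates f₁ f₂)
    (hf₁ : SingleCrossing f₁) (hf₂ : SingleCrossing f₂) (α₁ α₂ : ℝ)
    {l m h : Θ} (hlm : l < m) (hmh : m < h) :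
    sign (α₁ * f₁ m + α₂ * f₂ m) ∈
      Set.uIcc (sign (α₁ * f₁ l + α₂ * f₂ l)) (sign (α₁ * f₁ h + α₂ * f₂ h)) := by
  obtain ⟨hnonneg, hzero⟩ := ratioDominates_iff_planarCross.1 hf
  have hlm_nonneg := hnonneg l m hlm
  have hmh_nonneg := hnonneg m h hmh
  rcases (hnonneg l h (hlm.trans hmh)).eq_or_lt' with hlh | hlh
  · obtain ⟨hlm_zero, hmh_zero⟩ := (hzero l m h hlm hmh).1 hlh
    have hcollinear : ∀ a ∈ ({l, m, h} : Set Θ), ∀ b ∈ ({l, m, h} : Set Θ),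
        planarCross f₁ f₂ a b = 0 := by
      simp [← neg_planarCross f₁ f₂ l, ← neg_planarCross f₁ f₂ m h, *]
    obtain ⟨c, hc | hc⟩ := exists_linComb_eq_const_mul hcollinear α₁ α₂
    · simpa [hc] using (hf₁.const_mul c).sign_mem_uIcc hlm.le hmh.le
    · simpa [hc] using (hf₂.const_mul c).sign_mem_uIcc hlm.le hmh.le
  · refine sign_mem_uIcc_of_mul_eq_add hmh_nonneg hlm_nonneg ?_ hlh
      (linComb_mul_planarCross f₁ f₂ α₁ α₂ l m h)
    by_contra! hsum
    exact hlh.ne' ((hzero l m h hlm hmh).2 ⟨by linarith, by linarith⟩)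

lemma RatioDominates.singleCrossing_linComb [IsDirectedOrder Θ] [IsCodirectedOrder Θ]
    (hf : RatioDominates f₁ f₂) (hf₁ : SingleCrossing f₁) (hf₂ : SingleCrossing f₂)
    (α₁ α₂ : ℝ) : SingleCrossing fun θ => α₁ * f₁ θ + α₂ * f₂ θ := by
  refine singleCrossing_iff_sign.2 (monotone_or_antitone_of_forall_mem_uIcc fun l m h hlm hmh => ?_)
  rcases hlm.eq_or_lt with rfl | hlm
  · exact Set.left_mem_uIcc
  rcases hmh.eq_or_lt with rfl | hmh
  · exact Set.right_mem_uIcc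
  exact hf.sign_linComb_mem_uIcc hf₁ hf₂ α₁ α₂ hlm hmh

end RatioDominates

/-- Every linear combination of `f₁` and `f₂` is single crossing: `LinCombSCPreserving` for a
two-element family, with the coefficients written out. -/
def LinCombSingleCrossing {Θ : Type*} [PartialOrder Θ] (f₁ f₂ : Θ → ℝ) : Prop :=
  ∀ α₁ α₂ : ℝ, SingleCrossing fun θ => α₁ * f₁ θ + α₂ * f₂ θ

namespace LinCombSingleCrossing

variable {Θ : Type*} [PartialOrder Θ] {f₁ f₂ : Θ → ℝ}

lemma swap (H : LinCombSingleCrossing f₁ f₂) : LinCombSingleCrossing f₂ f₁ := fun α₁ α₂ => by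
  simpa only [add_comm] using H α₂ α₁

lemma singleCrossing_left (H : LinCombSingleCrossing f₁ f₂) : SingleCrossing f₁ := by
  simpa using H 1 0

lemma singleCrossing_planarCross_left (H : LinCombSingleCrossing f₁ f₂) (b : Θ) :
    SingleCrossing fun a => planarCross f₁ f₂ a b := by
  convert H (-f₂ b) (f₁ b) using 2
  simp only [planarCross]
  ring

lemma singleCrossing_planarCross_right (H : LinCombSingleCrossing f₁ f₂) (a : Θ) :
    SingleCrossing (planarCross f₁ f₂ a) := by
  convert H (f₂ a) (-f₁ a) using 2
  simp only [planarCross]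
  ring

lemma singleCrossing_planarCross_add (H : LinCombSingleCrossing f₁ f₂) (a b : Θ) :
    SingleCrossing fun θ => planarCross f₁ f₂ a θ + planarCross f₁ f₂ θ b := by
  convert H (f₂ a - f₂ b) (f₁ b - f₁ a) using 2
  simp only [planarCross]
  ring

lemma planarCross_pos_of_le_of_le (H : LinCombSingleCrossing f₁ f₂) {a b l h : Θ}
    (hla : l ≤ a) (hab : a ≤ b) (hbh : b ≤ h) (hpos : 0 < planarCross f₁ f₂ a b) :
    0 < planarCross f₁ f₂ l h := by
  have hah : 0 < planarCross f₁ f₂ a h := by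
    by_contra! hc
    exact hpos.not_ge ((H.singleCrossing_planarCross_right a).ordConnected_nonpos.out
      (planarCross_self f₁ f₂ a).le hc ⟨hab, hbh⟩)
  by_contra! hc
  exact hah.not_ge ((H.singleCrossing_planarCross_left h).ordConnected_nonpos.out
    hc (planarCross_self f₁ f₂ h).le ⟨hla, hab.trans hbh⟩)

lemma planarCross_nonneg_or_nonpos [IsDirectedOrder Θ] [IsCodirectedOrder Θ]
    (H : LinCombSingleCrossing f₁ f₂) :
    (∀ a b, a ≤ b → 0 ≤ planarCross f₁ f₂ a b) ∨ ∀ a b, a ≤ b → planarCross f₁ f₂ a b ≤ 0 := by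
  by_contra! hc
  obtain ⟨⟨a, b, hab, hneg⟩, c, d, hcd, hpos⟩ := hc
  obtain ⟨l, hla, hlc⟩ := exists_le_le a c
  obtain ⟨h, hbh, hdh⟩ := exists_ge_ge b d
  rw [← neg_pos, ← planarCross_swap] at hneg
  have hlh_neg := H.swap.planarCross_pos_of_le_of_le hla hab hbh hneg
  rw [planarCross_swap, neg_pos] at hlh_neg
  exact lt_asymm hlh_neg (H.planarCross_pos_of_le_of_le hlc hcd hdh hpos)

lemma planarCross_add_eq_zero_iff (H : LinCombSingleCrossing f₁ f₂) {l m h : Θ} (hlm : l ≤ m)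
    (hmh : m ≤ h) :
    planarCross f₁ f₂ l m + planarCross f₁ f₂ m h = 0 ↔ planarCross f₁ f₂ l h = 0 := by
  simpa using (H.singleCrossing_planarCross_add l h).eq_zero_iff_of_eq hlm hmh (by simp)

lemma ratioDominates (H : LinCombSingleCrossing f₁ f₂)
    (hnonneg : ∀ a b, a ≤ b → 0 ≤ planarCross f₁ f₂ a b) : RatioDominates f₁ f₂ := by
  refine ratioDominates_iff_planarCross.2 ⟨fun l h hlh => hnonneg l h hlh.le, ?_⟩
  intro l m h hlm hmh
  rw [← H.planarCross_add_eq_zero_iff hlm.le hmh.le,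
    add_eq_zero_iff_of_nonneg (hnonneg l m hlm.le) (hnonneg m h hmh.le)]

lemma ratioOrdered [IsDirectedOrder Θ] [IsCodirectedOrder Θ] (H : LinCombSingleCrossing f₁ f₂) :
    RatioOrdered f₁ f₂ :=
  H.planarCross_nonneg_or_nonpos.imp H.ratioDominates fun hnonpos =>
    H.swap.ratioDominates fun a b hab => by
      rw [planarCross_swap, neg_nonneg]
      exact hnonpos a b hab

end LinCombSingleCrossing

/-- All linear combinations of `f₁, f₂` are single crossing iff
`f₁` and `f₂` are each single crossing and ratio ordered. -/
theorem linComb_singleCrossing_iff_ratioOrdered {Θ : Type*} [PartialOrder Θ]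
    (hub : ∀ θ₁ θ₂ : Θ, ∃ θ : Θ, θ₁ ≤ θ ∧ θ₂ ≤ θ)
    (hlb : ∀ θ₁ θ₂ : Θ, ∃ θ : Θ, θ ≤ θ₁ ∧ θ ≤ θ₂)
    (f₁ f₂ : Θ → ℝ) :
    (∀ α₁ α₂ : ℝ, SingleCrossing (fun θ => α₁ * f₁ θ + α₂ * f₂ θ)) ↔
      (SingleCrossing f₁ ∧ SingleCrossing f₂ ∧ RatioOrdered f₁ f₂) := by
  have : IsDirectedOrder Θ := ⟨hub⟩
  have : IsCodirectedOrder Θ := ⟨hlb⟩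
  constructor
  · rintro (H : LinCombSingleCrossing f₁ f₂)
    exact ⟨H.singleCrossing_left, H.swap.singleCrossing_left, H.ratioOrdered⟩
  · rintro ⟨hf₁, hf₂, hf | hf⟩
    · exact hf.singleCrossing_linComb hf₁ hf₂
    · exact LinCombSingleCrossing.swap (hf.singleCrossing_linComb hf₂ hf₁)
end

section
/- Let Θ be a partially ordered set in which every pair of elements has an upper bound and a lower bound in Θ, and suppose there exists a strictly increasing function from Θ to ℝ (i.e., a function h₀ : Θ → ℝ with θ < θ' implying h₀(θ) < h₀(θ')). Let A be a set, let u : A × Θ → ℝ be such that the environment (A, Θ, u) is convex, and suppose A is minimal with respect to u (for all distinct a, a' ∈ A there is θ ∈ Θ with u(a,θ) ≠ u(a',θ)). Then u has strict single-crossing differences (SSCD) if and only if there exist functions g₁, g₂ : A → ℝ and f₁, f₂, h : Θ → ℝ such that f₁ and f₂ are strictly ratio ordered, and for all a ∈ A and θ ∈ Θ, u(a, θ) = g₁(a)·f₁(θ) + g₂(a)·f₂(θ) + h(θ). -/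
section VectorSpan

open scoped Pointwise

variable {𝕜 E : Type*} [Field 𝕜] [LinearOrder 𝕜] [IsStrictOrderedRing 𝕜] [AddCommGroup E]
  [Module 𝕜 E]

lemma exists_pos_smul_sub_eq_of_mem_vectorSpan {s : Set E} (hs : Convex 𝕜 s) (hne : s.Nonempty)
    {x : E} (hx : x ∈ vectorSpan 𝕜 s) :
    ∃ c : 𝕜, 0 < c ∧ ∃ y ∈ s, ∃ z ∈ s, c • (y - z) = x := by
  have mem_hull {v : E} : v ∈ ConvexCone.hull 𝕜 (s - s) ↔ ∃ c : 𝕜, 0 < c ∧ v ∈ c • (s - s) :=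
    ConvexCone.mem_hull_of_convex (hs.sub hs)
  have neg_mem {v : E} (hv : v ∈ ConvexCone.hull 𝕜 (s - s)) :
      -v ∈ ConvexCone.hull 𝕜 (s - s) := by
    obtain ⟨c, hc, _, ⟨y, hy, z, hz, rfl⟩, rfl⟩ := mem_hull.1 hv
    exact mem_hull.2 ⟨c, hc, z - y, Set.sub_mem_sub hz hy, by module⟩
  have zero_mem : 0 ∈ ConvexCone.hull 𝕜 (s - s) := by
    obtain ⟨y, hy⟩ := hne
    exact ConvexCone.subset_hull ⟨y, hy, y, hy, sub_self y⟩
  have hx_hull : x ∈ ConvexCone.hull 𝕜 (s - s) := by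
    induction hx using Submodule.span_induction with
    | mem v hv => exact ConvexCone.subset_hull hv
    | zero => exact zero_mem
    | add v w _ _ hv hw => exact add_mem hv hw
    | smul r v _ hv =>
      rcases lt_trichotomy r 0 with hr | rfl | hr
      · simpa using ConvexCone.smul_mem _ (neg_pos.2 hr) (neg_mem hv)
      · simpa using zero_mem
      · exact ConvexCone.smul_mem _ hr hv
  obtain ⟨c, hc, _, ⟨y, hy, z, hz, rfl⟩, rfl⟩ := mem_hull.1 hx_hull
  exact ⟨c, hc, y, hy, z, hz, rfl⟩

end VectorSpan

lemma exists_linearIndependent_pair_of_forall_not_le_span_singleton {K E : Type*} [DivisionRing K]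
    [AddCommGroup E] [Module K E] {V : Submodule K E} (hbot : V ≠ ⊥)
    (hspan : ∀ v ∈ V, v ≠ 0 → ¬V ≤ Submodule.span K {v}) :
    ∃ v ∈ V, ∃ w ∈ V, LinearIndependent K ![v, w] := by
  obtain ⟨v, hv, hv0⟩ := V.ne_bot_iff.1 hbot
  obtain ⟨w, hw, hwv⟩ := SetLike.not_le_iff_exists.1 (hspan v hv hv0)
  exact ⟨v, hv, w, hw, (LinearIndependent.pair_iff' hv0).2 fun a ha =>
    hwv (Submodule.mem_span_singleton.2 ⟨a, ha⟩)⟩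

lemma nontrivial_of_linearIndependent_pair {K ι : Type*} [Ring K] [StrongRankCondition K]
    {v w : ι → K} (hli : LinearIndependent K ![v, w]) : Nontrivial ι := by
  by_contra hι
  rw [not_nontrivial_iff_subsingleton] at hι
  have := Fintype.ofFinite ι
  have : 2 ≤ Fintype.card ι := by simpa using hli.fintype_card_le_finrank
  have : Fintype.card ι ≤ 1 := Fintype.card_le_one_iff_subsingleton.2 hι
  lia

lemma exists_lt_le_le_ge_ge {α : Type*} [Preorder α] [IsDirectedOrder α] [IsCodirectedOrder α]
    {l₁ h₁ : α} (hlt : l₁ < h₁) (l₂ h₂ : α) :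
    ∃ b t, b < t ∧ b ≤ l₁ ∧ b ≤ l₂ ∧ h₁ ≤ t ∧ h₂ ≤ t := by
  obtain ⟨b, hb₁, hb₂⟩ := exists_le_le l₁ l₂
  obtain ⟨t, ht₁, ht₂⟩ := exists_ge_ge h₁ h₂
  exact ⟨b, t, hb₁.trans_lt (hlt.trans_le ht₁), hb₁, hb₂, ht₁, ht₂⟩

lemma real_sign_le_sign_iff {x y : ℝ} :
    Real.sign x ≤ Real.sign y ↔ (0 ≤ x → 0 ≤ y) ∧ (0 < x → 0 < y) := by
  rcases lt_trichotomy x 0 with hx | rfl | hx <;> rcases lt_trichotomy y 0 with hy | rfl | hy <;>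
    norm_num [Real.sign_of_pos, Real.sign_of_neg, *, le_of_lt, not_le_of_gt, not_lt_of_gt]

section StrictSingleCrossing

variable {Θ : Type*} [PartialOrder Θ] {f : Θ → ℝ}

/-- Strict single crossing from below: the sign of `f` is increasing and `f` has no two ordered
zeros. The encoding merges the two conditions into one about each pair `l < h`. -/
def StrictCrossingFromBelow (f : Θ → ℝ) : Prop :=
  ∀ ⦃l h : Θ⦄, l < h → f l < 0 ∨ 0 < f h

lemma strictCrossingFromBelow_iff :
    StrictCrossingFromBelow f ↔ Monotone (fun θ => Real.sign (f θ)) ∧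
      ∀ l h : Θ, l < h → ¬(f l = 0 ∧ f h = 0) := by
  constructor
  · intro hf
    refine ⟨monotone_iff_forall_lt.2 fun l h hlt => real_sign_le_sign_iff.2 ?_, fun l h hlt => ?_⟩
    · rcases hf hlt with hl | hh
      · exact ⟨fun hl' => absurd hl hl'.not_gt, fun hl' => absurd hl hl'.not_gt⟩
      · exact ⟨fun _ => hh.le, fun _ => hh⟩
    · rintro ⟨hl, hh⟩
      simpa [hl, hh] using hf hlt
  · rintro ⟨hmono, hzero⟩ l h hlt
    obtain ⟨nonneg, pos⟩ := real_sign_le_sign_iff.1 (hmono hlt.le)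
    rcases lt_trichotomy (f l) 0 with hl | hl | hl
    · exact Or.inl hl
    · exact Or.inr ((nonneg hl.ge).lt_of_ne' fun hh => hzero l h hlt ⟨hl, hh⟩)
    · exact Or.inr (pos hl)

lemma strictSingleCrossing_iff :
    StrictSingleCrossing f ↔ StrictCrossingFromBelow f ∨ StrictCrossingFromBelow (-f) := by
  have monotone_neg : Monotone (fun θ => Real.sign (-f θ)) ↔ Antitone fun θ => Real.sign (f θ) := by
    simp only [Monotone, Antitone, Real.sign_neg, neg_le_neg_iff]
  simp only [StrictSingleCrossing, SingleCrossing, strictCrossingFromBelow_iff, Pi.neg_apply,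
    neg_eq_zero, monotone_neg, or_and_right]

lemma StrictCrossingFromBelow.pos_smul (hf : StrictCrossingFromBelow f) {c : ℝ} (hc : 0 < c) :
    StrictCrossingFromBelow (c • f) := fun _ _ hlt =>
  (hf hlt).imp (mul_neg_of_pos_of_neg hc) (mul_pos hc)

lemma StrictSingleCrossing.pos_smul (hf : StrictSingleCrossing f) {c : ℝ} (hc : 0 < c) :
    StrictSingleCrossing (c • f) := by
  rw [strictSingleCrossing_iff, ← smul_neg]
  exact (strictSingleCrossing_iff.1 hf).imp (·.pos_smul hc) (·.pos_smul hc)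

lemma StrictSingleCrossing.pos_of_lt_zero (hf : StrictSingleCrossing f) {x y z : Θ}
    (hx : 0 < f x) (hz : f z = 0) (hxz : x < z) (hyz : y < z) : 0 < f y := by
  rcases strictSingleCrossing_iff.1 hf with up | down
  · have := up hxz
    grind
  · simpa [hz] using down hyz

lemma StrictSingleCrossing.pos_of_zero_lt (hf : StrictSingleCrossing f) {x y z : Θ}
    (hx : 0 < f x) (hz : f z = 0) (hzx : z < x) (hzy : z < y) : 0 < f y := by
  rcases strictSingleCrossing_iff.1 hf with up | down
  · simpa [hz] using up hzy
  · have := down hzx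
    simp only [Pi.neg_apply] at this
    grind

end StrictSingleCrossing

section CrossDet

variable {Θ : Type*} {f₁ f₂ F : Θ → ℝ}

/-- The determinant of the plane vectors `(f₁, f₂)(y)` and `(f₁, f₂)(x)`, whose sign carries the
ratio order. The rows are ordered so that it is positive for all `x < y` when `f₁` strictly ratio
dominates `f₂`. -/
def crossDet (f₁ f₂ : Θ → ℝ) (x y : Θ) : ℝ :=
  f₁ y * f₂ x - f₁ x * f₂ y

lemma crossDet_swap (f₁ f₂ : Θ → ℝ) (x y : Θ) : crossDet f₂ f₁ x y = -crossDet f₁ f₂ x y := by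
  simp only [crossDet]
  ring

lemma crossDet_self (f₁ f₂ : Θ → ℝ) (x : Θ) : crossDet f₁ f₂ x x = 0 :=
  sub_self _

lemma mul_crossDet_of_mem_span_pair (hF : F ∈ Submodule.span ℝ {f₁, f₂}) (l m h : Θ) :
    F m * crossDet f₁ f₂ l h = F l * crossDet f₁ f₂ m h + F h * crossDet f₁ f₂ l m := by
  obtain ⟨α, β, rfl⟩ := Submodule.mem_span_pair.1 hF
  simp only [crossDet, Pi.add_apply, Pi.smul_apply, smul_eq_mul]
  ring

lemma eq_zero_of_mem_span_pair_of_crossDet_ne_zero (hF : F ∈ Submodule.span ℝ {f₁, f₂}) {l h : Θ}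
    (hD : crossDet f₁ f₂ l h ≠ 0) (hl : F l = 0) (hh : F h = 0) : F = 0 := by
  funext m
  simpa [hl, hh, hD] using mul_crossDet_of_mem_span_pair hF l m h

variable {V : Submodule ℝ (Θ → ℝ)}

lemma crossDet_left_mem (hf₁ : f₁ ∈ V) (hf₂ : f₂ ∈ V) (z : Θ) : (crossDet f₁ f₂ · z) ∈ V := by
  convert V.sub_mem (V.smul_mem (f₁ z) hf₂) (V.smul_mem (f₂ z) hf₁) using 1
  ext
  simp only [crossDet, Pi.sub_apply, Pi.smul_apply, smul_eq_mul, mul_comm (f₂ z)]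

lemma crossDet_right_mem (hf₁ : f₁ ∈ V) (hf₂ : f₂ ∈ V) (x : Θ) : crossDet f₁ f₂ x ∈ V := by
  convert V.sub_mem (V.smul_mem (f₂ x) hf₁) (V.smul_mem (f₁ x) hf₂) using 1
  ext
  simp only [crossDet, Pi.sub_apply, Pi.smul_apply, smul_eq_mul, mul_comm (f₂ x)]

variable [PartialOrder Θ]

lemma strictRatioDominates_iff_crossDet_pos :
    StrictRatioDominates f₁ f₂ ↔ ∀ l h : Θ, l < h → 0 < crossDet f₁ f₂ l h := by
  simp only [StrictRatioDominates, crossDet, sub_pos]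

lemma StrictRatioDominates.crossDet_nonneg (hd : StrictRatioDominates f₁ f₂) {l h : Θ}
    (hle : l ≤ h) : 0 ≤ crossDet f₁ f₂ l h := by
  rcases hle.eq_or_lt with rfl | hlt
  · exact (crossDet_self f₁ f₂ l).ge
  · exact (strictRatioDominates_iff_crossDet_pos.1 hd l h hlt).le

end CrossDet

section Sufficiency

variable {Θ : Type*} [PartialOrder Θ] {f₁ f₂ F : Θ → ℝ}

lemma StrictRatioDominates.nonneg_and_nonpos_of_le (hd : StrictRatioDominates f₁ f₂)
    (hF : F ∈ Submodule.span ℝ {f₁, f₂}) {b l h t : Θ} (hbl : b ≤ l) (hlh : l < h) (hht : h ≤ t)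
    (hl : 0 ≤ F l) (hh : F h ≤ 0) : 0 ≤ F b ∧ F t ≤ 0 := by
  have hD := strictRatioDominates_iff_crossDet_pos.1 hd
  constructor
  · refine nonneg_of_mul_nonneg_left ?_ (hD l h hlh)
    have := mul_crossDet_of_mem_span_pair hF b l h
    have := mul_nonneg hl (hD b h (hbl.trans_lt hlh)).le
    have := mul_nonpos_of_nonpos_of_nonneg hh (hd.crossDet_nonneg hbl)
    linarith
  · refine nonpos_of_mul_nonpos_left ?_ (hD l h hlh)
    have := mul_crossDet_of_mem_span_pair hF l h t
    have := mul_nonneg hl (hd.crossDet_nonneg hht)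
    have := mul_nonpos_of_nonpos_of_nonneg hh (hD l t (hlh.trans_le hht)).le
    linarith

variable [IsDirectedOrder Θ] [IsCodirectedOrder Θ]

lemma StrictRatioDominates.strictSingleCrossing_of_mem_span (hd : StrictRatioDominates f₁ f₂)
    (hF : F ∈ Submodule.span ℝ {f₁, f₂}) (hF0 : F ≠ 0) : StrictSingleCrossing F := by
  rw [strictSingleCrossing_iff]
  by_contra! hcon
  simp only [StrictCrossingFromBelow, Pi.neg_apply, not_forall, not_or, not_lt,
    neg_neg_iff_pos, neg_pos] at hcon
  obtain ⟨⟨l₁, h₁, hlt₁, hl₁, hh₁⟩, ⟨l₂, h₂, hlt₂, hl₂, hh₂⟩⟩ := hcon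
  obtain ⟨b, t, hbt, hb₁, hb₂, ht₁, ht₂⟩ := exists_lt_le_le_ge_ge hlt₁ l₂ h₂
  have down := hd.nonneg_and_nonpos_of_le hF hb₁ hlt₁ ht₁ hl₁ hh₁
  have up := hd.nonneg_and_nonpos_of_le (Submodule.neg_mem _ hF) hb₂ hlt₂ ht₂
    (neg_nonneg.2 hl₂) (neg_nonpos.2 hh₂)
  simp only [Pi.neg_apply, neg_nonneg, neg_nonpos] at up
  exact hF0 (eq_zero_of_mem_span_pair_of_crossDet_ne_zero hF
    (strictRatioDominates_iff_crossDet_pos.1 hd b t hbt).ne'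
    (up.1.antisymm down.1) (down.2.antisymm up.2))

lemma StrictRatioOrdered.strictSingleCrossing_of_mem_span (hr : StrictRatioOrdered f₁ f₂)
    (hF : F ∈ Submodule.span ℝ {f₁, f₂}) (hF0 : F ≠ 0) : StrictSingleCrossing F := by
  rcases hr with hd | hd
  · exact hd.strictSingleCrossing_of_mem_span hF hF0
  · exact hd.strictSingleCrossing_of_mem_span (Set.pair_comm f₁ f₂ ▸ hF) hF0

end Sufficiency

section OneDimensional

variable {Θ : Type*} [PartialOrder Θ] {f h₀ : Θ → ℝ}

lemma StrictCrossingFromBelow.exists_strictRatioDominates (hf : StrictCrossingFromBelow f)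
    (hh₀ : StrictMono h₀) : ∃ g : Θ → ℝ, StrictRatioDominates g f := by
  classical
  -- `g / f` must increase on `{f < 0}` and on `{0 < f}`, and be smaller on the latter set. As `g`
  -- is negative throughout, only pairs within one of the two sets need `h₀`.
  let g : Θ → ℝ := fun θ =>
    if f θ < 0 then Real.exp (h₀ θ) * f θ else
      if 0 < f θ then -Real.exp (-h₀ θ) * f θ else -1
  have g_of_neg {θ} (hθ : f θ < 0) : g θ = Real.exp (h₀ θ) * f θ := if_pos hθ
  have g_of_pos {θ} (hθ : 0 < f θ) : g θ = -Real.exp (-h₀ θ) * f θ := by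
    simp only [g, if_neg hθ.not_gt, if_pos hθ]
  have g_neg (θ) : g θ < 0 := by
    rcases lt_trichotomy (f θ) 0 with hθ | hθ | hθ
    · exact g_of_neg hθ ▸ mul_neg_of_pos_of_neg (Real.exp_pos _) hθ
    · simp [g, hθ]
    · exact g_of_pos hθ ▸ mul_neg_of_neg_of_pos (neg_neg_of_pos (Real.exp_pos _)) hθ
  refine ⟨g, fun l h hlt => ?_⟩
  rcases lt_or_ge (f l) 0 with hl | hl <;> rcases lt_or_ge 0 (f h) with hh | hh
  · exact (mul_neg_of_neg_of_pos (g_neg l) hh).trans (mul_pos_of_neg_of_neg (g_neg h) hl)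
  · rcases hh.lt_or_eq with hh | hh
    · rw [g_of_neg hl, g_of_neg hh, mul_assoc, mul_assoc, mul_comm (f h)]
      exact mul_lt_mul_of_pos_right (Real.exp_lt_exp.2 (hh₀ hlt)) (mul_pos_of_neg_of_neg hl hh)
    · rw [hh, mul_zero]
      exact mul_pos_of_neg_of_neg (g_neg h) hl
  · rcases hl.lt_or_eq with hl | hl
    · rw [g_of_pos hl, g_of_pos hh, mul_assoc, mul_assoc, mul_comm (f h)]
      exact mul_lt_mul_of_pos_right
        (neg_lt_neg (Real.exp_lt_exp.2 (neg_lt_neg (hh₀ hlt)))) (mul_pos hl hh)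
    · rw [← hl, mul_zero]
      exact mul_neg_of_neg_of_pos (g_neg l) hh
  · exact absurd (hf hlt) (by simp [hl, hh])

lemma StrictSingleCrossing.exists_strictRatioOrdered (hf : StrictSingleCrossing f)
    (hh₀ : StrictMono h₀) : ∃ g : Θ → ℝ, StrictRatioOrdered f g := by
  rcases strictSingleCrossing_iff.1 hf with up | down
  · obtain ⟨g, hg⟩ := up.exists_strictRatioDominates hh₀
    exact ⟨g, Or.inr hg⟩
  · obtain ⟨g, hg⟩ := down.exists_strictRatioDominates hh₀
    refine ⟨g, Or.inl fun l h hlt => ?_⟩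
    have := hg l h hlt
    simp only [Pi.neg_apply] at this
    linarith

end OneDimensional

section SSCSubspace

variable {Θ : Type*} [PartialOrder Θ] {V : Submodule ℝ (Θ → ℝ)} {f₁ f₂ : Θ → ℝ}

/-- A linear space of functions all of whose nonzero elements are strictly single crossing. For the
span of the utility differences this is the linear form of SSCD. -/
def SSCSubspace (V : Submodule ℝ (Θ → ℝ)) : Prop :=
  ∀ f ∈ V, f ≠ 0 → StrictSingleCrossing f

lemma SSCSubspace.injective_eval_pair (hV : SSCSubspace V) {l h : Θ} (hlt : l < h) :
    Function.Injective ((LinearMap.funLeft ℝ ℝ ![l, h]).domRestrict V) := by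
  rw [injective_iff_map_eq_zero]
  rintro ⟨f, hf⟩ hzero
  have hl : f l = 0 := congrFun hzero 0
  have hh : f h = 0 := congrFun hzero 1
  by_contra hne
  exact (hV f hf fun h0 => hne (Subtype.ext h0)).2 l h hlt ⟨hl, hh⟩

lemma SSCSubspace.span_pair_eq (hV : SSCSubspace V) {l h : Θ} (hlt : l < h) (hf₁ : f₁ ∈ V)
    (hf₂ : f₂ ∈ V) (hli : LinearIndependent ℝ ![f₁, f₂]) : Submodule.span ℝ {f₁, f₂} = V := by
  have hinj := hV.injective_eval_pair hlt
  have : FiniteDimensional ℝ V := .of_injective _ hinj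
  refine Submodule.eq_of_le_of_finrank_le (Submodule.span_le.2 (Set.pair_subset hf₁ hf₂)) ?_
  calc Module.finrank ℝ V ≤ Module.finrank ℝ (Fin 2 → ℝ) :=
        LinearMap.finrank_le_finrank_of_injective hinj
    _ = Module.finrank ℝ (Submodule.span ℝ {f₁, f₂}) := by
        rw [← Matrix.range_cons_cons_empty f₁ f₂ ![], finrank_span_eq_card hli,
          Module.finrank_fintype_fun_eq_card]

lemma SSCSubspace.crossDet_ne_zero (hV : SSCSubspace V) (hf₁ : f₁ ∈ V) (hf₂ : f₂ ∈ V)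
    (hli : LinearIndependent ℝ ![f₁, f₂]) {l h : Θ} (hlt : l < h) : crossDet f₁ f₂ l h ≠ 0 := by
  intro hD
  have hdet : (!![f₁ l, f₂ l; f₁ h, f₂ h]).det = 0 := by
    rw [Matrix.det_fin_two_of]
    simp only [crossDet] at hD
    linarith
  obtain ⟨v, hv, hker⟩ := Matrix.exists_mulVec_eq_zero_iff.2 hdet
  have hl : f₁ l * v 0 + f₂ l * v 1 = 0 := by
    simpa [Matrix.mulVec, dotProduct] using congrFun hker 0
  have hh : f₁ h * v 0 + f₂ h * v 1 = 0 := by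
    simpa [Matrix.mulVec, dotProduct] using congrFun hker 1
  have hmem : v 0 • f₁ + v 1 • f₂ ∈ V := V.add_mem (V.smul_mem _ hf₁) (V.smul_mem _ hf₂)
  refine (hV _ hmem fun hzero => hv ?_).2 l h hlt ⟨?_, ?_⟩
  · obtain ⟨h0, h1⟩ := LinearIndependent.pair_iff.1 hli _ _ hzero
    ext i
    fin_cases i <;> assumption
  · simpa [mul_comm] using hl
  · simpa [mul_comm] using hh

lemma SSCSubspace.crossDet_pos_of_le (hV : SSCSubspace V) (hf₁ : f₁ ∈ V) (hf₂ : f₂ ∈ V)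
    {b l h t : Θ} (hbl : b ≤ l) (hlh : l < h) (hht : h ≤ t) (hD : 0 < crossDet f₁ f₂ l h) :
    0 < crossDet f₁ f₂ b t := by
  have hbh : 0 < crossDet f₁ f₂ b h :=
    (hV _ (crossDet_left_mem hf₁ hf₂ h) fun h0 => hD.ne' (congrFun h0 l)).pos_of_lt_zero hD
      (crossDet_self f₁ f₂ h) hlh (hbl.trans_lt hlh)
  exact (hV _ (crossDet_right_mem hf₁ hf₂ b) fun h0 => hbh.ne' (congrFun h0 h)).pos_of_zero_lt hbh
    (crossDet_self f₁ f₂ b) (hbl.trans_lt hlh) (hbl.trans_lt (hlh.trans_le hht))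

variable [IsDirectedOrder Θ] [IsCodirectedOrder Θ]

lemma SSCSubspace.strictRatioOrdered (hV : SSCSubspace V) (hf₁ : f₁ ∈ V) (hf₂ : f₂ ∈ V)
    (hli : LinearIndependent ℝ ![f₁, f₂]) : StrictRatioOrdered f₁ f₂ := by
  by_contra hcon
  simp only [StrictRatioOrdered, strictRatioDominates_iff_crossDet_pos, crossDet_swap f₁ f₂,
    not_or, not_forall, not_lt, neg_pos] at hcon
  obtain ⟨⟨l₁, h₁, hlt₁, hD₁⟩, ⟨l₂, h₂, hlt₂, hD₂⟩⟩ := hcon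
  obtain ⟨b, t, -, hb₁, hb₂, ht₁, ht₂⟩ := exists_lt_le_le_ge_ge hlt₁ l₂ h₂
  have neg : 0 < crossDet f₂ f₁ b t := by
    refine hV.crossDet_pos_of_le hf₂ hf₁ hb₁ hlt₁ ht₁ ?_
    rw [crossDet_swap, neg_pos]
    exact hD₁.lt_of_ne (hV.crossDet_ne_zero hf₁ hf₂ hli hlt₁)
  have pos : 0 < crossDet f₁ f₂ b t :=
    hV.crossDet_pos_of_le hf₁ hf₂ hb₂ hlt₂ ht₂
      (hD₂.lt_of_ne' (hV.crossDet_ne_zero hf₁ hf₂ hli hlt₂))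
  rw [crossDet_swap] at neg
  linarith

theorem sscSubspace_iff_exists_le_span_pair (hrep : ∃ h₀ : Θ → ℝ, StrictMono h₀) :
    SSCSubspace V ↔ ∃ f₁ f₂, StrictRatioOrdered f₁ f₂ ∧ V ≤ Submodule.span ℝ {f₁, f₂} := by
  refine ⟨fun hV => ?_, fun ⟨f₁, f₂, hr, hle⟩ f hf hf0 =>
    hr.strictSingleCrossing_of_mem_span (hle hf) hf0⟩
  obtain ⟨h₀, hh₀⟩ := hrep
  by_cases hdim : ∃ f, StrictSingleCrossing f ∧ V ≤ Submodule.span ℝ {f}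
  · obtain ⟨f, hf, hle⟩ := hdim
    obtain ⟨g, hr⟩ := hf.exists_strictRatioOrdered hh₀
    exact ⟨f, g, hr, hle.trans (Submodule.span_mono (by simp))⟩
  · push Not at hdim
    have one_ssc : StrictSingleCrossing (1 : Θ → ℝ) :=
      strictSingleCrossing_iff.2 (Or.inl fun _ _ _ => Or.inr one_pos)
    have hbot : V ≠ ⊥ := fun hV0 => hdim 1 one_ssc (hV0 ▸ bot_le)
    obtain ⟨f₁, hf₁, f₂, hf₂, hli⟩ :=
      exists_linearIndependent_pair_of_forall_not_le_span_singleton hbot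
        fun f hf hf0 => hdim f (hV f hf hf0)
    have := nontrivial_of_linearIndependent_pair hli
    obtain ⟨l, h, hlt⟩ := exists_lt_of_directed_le Θ
    exact ⟨f₁, f₂, hV.strictRatioOrdered hf₁ hf₂ hli, (hV.span_pair_eq hlt hf₁ hf₂ hli).ge⟩

end SSCSubspace

section Environment

variable {A Θ : Type*} {u : A → Θ → ℝ}

lemma convexEnv_iff_convex_range : ConvexEnv u ↔ Convex ℝ (Set.range u) := by
  rw [convex_iff_forall_pos]
  simp only [Set.forall_mem_range]
  simp only [Set.mem_range, ConvexEnv, funext_iff, Pi.add_apply, Pi.smul_apply, smul_eq_mul]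
  refine forall₂_congr fun a a' => ⟨fun hu α β hα hβ hαβ => ?_, fun hu lam h0 h1 => ?_⟩
  · obtain rfl : β = 1 - α := by linarith
    exact hu α hα (by linarith)
  · exact hu h0 (sub_pos.2 h1) (by ring)

lemma minimalActions_iff_injective : MinimalActions u ↔ Function.Injective u := by
  simp only [MinimalActions, Function.injective_iff_pairwise_ne, Pairwise, Function.onFun,
    Function.ne_iff]

lemma vectorSpan_range_le_span_pair_iff {f₁ f₂ : Θ → ℝ} :
    vectorSpan ℝ (Set.range u) ≤ Submodule.span ℝ {f₁, f₂} ↔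
      ∃ (g₁ g₂ : A → ℝ) (h : Θ → ℝ), ∀ a θ, u a θ = g₁ a * f₁ θ + g₂ a * f₂ θ + h θ := by
  constructor
  · intro hle
    rcases isEmpty_or_nonempty A with _ | ⟨⟨a₀⟩⟩
    · exact ⟨0, 0, 0, isEmptyElim⟩
    have hmem (a : A) : u a - u a₀ ∈ Submodule.span ℝ {f₁, f₂} :=
      hle (vsub_mem_vectorSpan ℝ (Set.mem_range_self a) (Set.mem_range_self a₀))
    choose g₁ g₂ hg using fun a => Submodule.mem_span_pair.1 (hmem a)
    exact ⟨g₁, g₂, u a₀, fun a θ => sub_eq_iff_eq_add.1 (congrFun (hg a) θ).symm⟩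
  · rintro ⟨g₁, g₂, h, hu⟩
    refine Submodule.span_le.2 ?_
    rintro _ ⟨_, ⟨a, rfl⟩, _, ⟨a', rfl⟩, rfl⟩
    refine Submodule.mem_span_pair.2 ⟨g₁ a - g₁ a', g₂ a - g₂ a', funext fun θ => ?_⟩
    simp only [Pi.add_apply, Pi.smul_apply, smul_eq_mul, vsub_eq_sub, Pi.sub_apply, hu]
    ring

theorem sscd_iff_sscSubspace_vectorSpan [PartialOrder Θ] (hconv : ConvexEnv u)
    (hmin : MinimalActions u) : SSCD u ↔ SSCSubspace (vectorSpan ℝ (Set.range u)) := by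
  constructor
  · intro hu f hf hf0
    have hne : (Set.range u).Nonempty := by
      rw [Set.nonempty_iff_ne_empty]
      intro hempty
      exact hf0 (by simpa [hempty] using hf)
    obtain ⟨c, hc, _, ⟨a, rfl⟩, _, ⟨a', rfl⟩, rfl⟩ :=
      exists_pos_smul_sub_eq_of_mem_vectorSpan (convexEnv_iff_convex_range.1 hconv) hne hf
    refine StrictSingleCrossing.pos_smul (hu a a' ?_) hc
    rintro rfl
    exact hf0 (by simp)
  · intro hV a a' hne
    exact hV _ (vsub_mem_vectorSpan ℝ (Set.mem_range_self a) (Set.mem_range_self a'))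
      (sub_ne_zero.2 ((minimalActions_iff_injective.1 hmin).ne hne))

end Environment

/-- In a convex environment with a strictly increasing real-valued
function on `Θ` and a minimal `A`, `u` has SSCD iff it has the two-statistic form
with strictly ratio-ordered coefficient functions. -/
theorem sscd_in_convex_env_iff {Θ A : Type*} [PartialOrder Θ]
    (hub : ∀ θ₁ θ₂ : Θ, ∃ θ : Θ, θ₁ ≤ θ ∧ θ₂ ≤ θ)
    (hlb : ∀ θ₁ θ₂ : Θ, ∃ θ : Θ, θ ≤ θ₁ ∧ θ ≤ θ₂)
    (hrep : ∃ h₀ : Θ → ℝ, StrictMono h₀)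
    (u : A → Θ → ℝ) (hconv : ConvexEnv u) (hmin : MinimalActions u) :
    SSCD u ↔
      ∃ (g₁ g₂ : A → ℝ) (f₁ f₂ h : Θ → ℝ),
        StrictRatioOrdered f₁ f₂ ∧
        (∀ (a : A) (θ : Θ), u a θ = g₁ a * f₁ θ + g₂ a * f₂ θ + h θ) := by
  have : IsDirectedOrder Θ := ⟨hub⟩
  have : IsCodirectedOrder Θ := ⟨hlb⟩
  rw [sscd_iff_sscSubspace_vectorSpan hconv hmin, sscSubspace_iff_exists_le_span_pair hrep]
  simp only [vectorSpan_range_le_span_pair_iff]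
  constructor
  · rintro ⟨f₁, f₂, hr, g₁, g₂, h, hu⟩
    exact ⟨g₁, g₂, f₁, f₂, h, hr, hu⟩
  · rintro ⟨g₁, g₂, f₁, f₂, h, hr, hu⟩
    exact ⟨f₁, f₂, hr, g₁, g₂, h, hu⟩
end
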